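/- Let f₂ ∈ F_(C,β) and ξ > 0, and let ε ∈ (0,1) satisfy ε ≤ ξ/12, ε·‖∂f₂/∂x‖_{C⁰} ≤ ξ/12, ε(1+C) ≤ ξ/12, and ε ≤ (ξ/(24C^β))^{1/(β−α)}. Define f₃(x,y) = (1−ε)f₂(x,y) + εy and C_ε = max{C(1−ε)+ε, C/(1−ε+Cε)}. Then C_ε < C, f₃ ∈ F_(C_ε,β), and d_α(f₃, f₂) < ξ/3. -/

import Mathlib

open MeasureTheory Set Filter Topology
open scoped ENNReal

noncomputable section

/-- The unit square `M = [0,1]²`. -/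
def MSq : Set (ℝ × ℝ) := unitInterval ×ˢ unitInterval

/-- Lower `(C,γ)`-bi-Hölder bound in the second variable. -/
def BiHolderLower (C γ : ℝ) (f : ℝ → ℝ → ℝ) : Prop :=
  ∀ x ∈ unitInterval, ∀ y₁ ∈ unitInterval, ∀ y₂ ∈ unitInterval, y₁ ≠ y₂ →
    C⁻¹ * |y₂ - y₁| ^ (1 / γ) ≤ |f x y₂ - f x y₁|

/-- Upper `(C,γ)`-Hölder bound in the second variable. -/
def BiHolderUpper (C γ : ℝ) (f : ℝ → ℝ → ℝ) : Prop :=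
  ∀ x ∈ unitInterval, ∀ y₁ ∈ unitInterval, ∀ y₂ ∈ unitInterval, y₁ ≠ y₂ →
    |f x y₂ - f x y₁| ≤ C * |y₂ - y₁| ^ γ

/-- Membership in the space `F_(C,γ)`: conditions (i)–(iv); `fx` plays the role of `∂f/∂x`. -/
structure IsFol (C γ : ℝ) (f fx : ℝ → ℝ → ℝ) : Prop where
  mapsTo : ∀ x ∈ unitInterval, ∀ y ∈ unitInterval, f x y ∈ unitInterval
  hasDeriv : ∀ y ∈ unitInterval, ∀ x ∈ unitInterval,
    HasDerivWithinAt (fun x' => f x' y) (fx x y) unitInterval x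
  derivCont : ContinuousOn (fun p : ℝ × ℝ => fx p.1 p.2) MSq
  eq_id : ∀ y ∈ unitInterval, f 0 y = y
  eq_bot : ∀ x ∈ unitInterval, f x 0 = 0
  eq_top : ∀ x ∈ unitInterval, f x 1 = 1
  lower : BiHolderLower C γ f
  upper : BiHolderUpper C γ f

/-- The space `F_(C,γ)`. -/
structure Fol (C γ : ℝ) where
  f : ℝ → ℝ → ℝ
  fx : ℝ → ℝ → ℝ
  isFol : IsFol C γ f fx

/-- The inverse of `y ↦ f x y` on `[0,1]`, i.e. the holonomy `h^f_{x,0}`. -/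
def hinv (f : ℝ → ℝ → ℝ) (x : ℝ) : ℝ → ℝ := Function.invFunOn (f x) unitInterval

/-- The `C⁰` distance over the square. -/
def C0dist (u v : ℝ → ℝ → ℝ) : ℝ :=
  sSup {r | ∃ x ∈ unitInterval, ∃ y ∈ unitInterval, r = |u x y - v x y|}

/-- The `α`-Hölder seminorm of the difference `h - k` on `[0,1]`. -/
def holDist (α : ℝ) (h k : ℝ → ℝ) : ℝ :=
  sSup {r | ∃ y₁ ∈ unitInterval, ∃ y₂ ∈ unitInterval, y₁ ≠ y₂ ∧
    r = |(h y₂ - k y₂) - (h y₁ - k y₁)| / |y₂ - y₁| ^ α}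

/-- The distance `d_α`, on raw data `(f, ∂f/∂x)`, `(g, ∂g/∂x)`. -/
def dalpha (α : ℝ) (f fx g gx : ℝ → ℝ → ℝ) : ℝ :=
  C0dist f g + C0dist fx gx +
    sSup {r | ∃ x ∈ unitInterval,
      r = max (holDist α (f x) (g x)) (holDist α (hinv f x) (hinv g x))}

/-- The distance `d_α` on `F_(C,γ)`. -/
def dalphaF {C γ : ℝ} (α : ℝ) (F G : Fol C γ) : ℝ := dalpha α F.f F.fx G.f G.fx

/-- Openness with respect to a distance function. -/
def IsOpenWrt {X : Type*} (d : X → X → ℝ) (s : Set X) : Prop :=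
  ∀ f ∈ s, ∃ ε > 0, ∀ g, d g f < ε → g ∈ s

/-- Density with respect to a distance function. -/
def IsDenseWrt {X : Type*} (d : X → X → ℝ) (s : Set X) : Prop :=
  ∀ f : X, ∀ ε > 0, ∃ g ∈ s, d g f < ε

/-- Lebesgue measure `μ` on the unit square `M`. -/
def muM : Measure (ℝ × ℝ) := volume.restrict MSq

/-- The projection `π_f(x,z) = f(x,·)⁻¹(z)` along the leaves. -/
def projF (f : ℝ → ℝ → ℝ) : ℝ × ℝ → ℝ := fun p => hinv f p.1 p.2

/-- The quotient measure `μ̂ = (π_f)_* μ`. -/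
def quotM {C γ : ℝ} (F : Fol C γ) : Measure ℝ := muM.map (projF F.f)

/-- The leaf `L_y = {(x, f(x,y)) : x ∈ [0,1]}`. -/
def Leaf {C γ : ℝ} (F : Fol C γ) (y : ℝ) : Set (ℝ × ℝ) :=
  (fun x => (x, F.f x y)) '' unitInterval

/-- `(ν_y)` is a Rokhlin disintegration of Lebesgue measure on the square w.r.t. `π_f`. -/
def IsDisint {C γ : ℝ} (F : Fol C γ) (ν : ℝ → Measure (ℝ × ℝ)) : Prop :=
  (∀ y, IsProbabilityMeasure (ν y)) ∧
  (∀ E : Set (ℝ × ℝ), MeasurableSet E → Measurable fun y => ν y E) ∧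
  (∀ᵐ y ∂quotM F, ν y (Leaf F y) = 1) ∧
  (∀ E : Set (ℝ × ℝ), MeasurableSet E → muM E = ∫⁻ y, ν y E ∂quotM F)

/-- The element `P_i` of the partition `P_{f,n}`. -/
def Pelt (f : ℝ → ℝ → ℝ) (n i : ℕ) : Set (ℝ × ℝ) :=
  {p | p.1 ∈ unitInterval ∧ f p.1 ((i : ℝ) / 2 ^ n) ≤ p.2 ∧ p.2 < f p.1 (((i : ℝ) + 1) / 2 ^ n)}

/-- `Ĩ = [b₁,b₂] × [0,1]`. -/
def Itilde (b₁ b₂ : ℝ) : Set (ℝ × ℝ) := Icc b₁ b₂ ×ˢ unitInterval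

/-- The set `A_{n,m,I}`. -/
def Aset (C γ : ℝ) (n m : ℕ) (b₁ b₂ : ℝ) : Set (Fol C γ) :=
  {F | ∀ i < 2 ^ n,
    muM (Pelt F.f n i ∩ Itilde b₁ b₂) / muM (Pelt F.f n i) < 1 / (m : ℝ≥0∞) ∨
    1 - 1 / (m : ℝ≥0∞) < muM (Pelt F.f n i ∩ Itilde b₁ b₂) / muM (Pelt F.f n i)}

/-- The set `B_{m,I}`. -/
def Bset (C γ : ℝ) (m : ℕ) (b₁ b₂ : ℝ) : Set (Fol C γ) := ⋃ n : ℕ, Aset C γ n m b₁ b₂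

/-- The leaf measure `λ_y`: pushforward of 1-dimensional Lebesgue measure on `[0,1]`
under `x ↦ (x, f(x,y))`. -/
def leafMeas {C γ : ℝ} (F : Fol C γ) (y : ℝ) : Measure (ℝ × ℝ) :=
  (volume.restrict unitInterval).map fun x => (x, F.f x y)

lemma fol_ne {C γ : ℝ} (hC : 0 < C) {f fx : ℝ → ℝ → ℝ} (h : IsFol C γ f fx)
    {x : ℝ} (hx : x ∈ unitInterval) : InjOn (f x) unitInterval := by
  intro a ha b hb hab
  by_contra hne
  have h1 := h.lower x hx a ha b hb hne
  rw [hab, sub_self, abs_zero] at h1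
  have h2 : 0 < |b - a| := abs_pos.2 (sub_ne_zero.2 (Ne.symm hne))
  have : 0 < C⁻¹ * |b - a| ^ (1 / γ) := by positivity
  linarith

lemma fol_cont {C γ : ℝ} (hγ : 0 < γ) {f fx : ℝ → ℝ → ℝ} (h : IsFol C γ f fx)
    {x : ℝ} (hx : x ∈ unitInterval) : ContinuousOn (f x) unitInterval := by
  intro a ha
  have hz : Tendsto (fun b : ℝ => C * |b - a| ^ γ) (𝓝[unitInterval] a) (𝓝 0) := by
    have hc : Continuous (fun b : ℝ => C * |b - a| ^ γ) := by
      refine continuous_const.mul (Continuous.rpow_const (by fun_prop) ?_)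
      intro _; right; exact hγ.le
    have := (hc.tendsto a).mono_left (nhdsWithin_le_nhds (s := unitInterval))
    simpa [Real.zero_rpow hγ.ne'] using this
  unfold ContinuousWithinAt
  rw [tendsto_iff_dist_tendsto_zero]
  refine squeeze_zero' (Eventually.of_forall fun _ => dist_nonneg) ?_ hz
  filter_upwards [self_mem_nhdsWithin] with b hb
  rw [Real.dist_eq]
  by_cases hne : a = b
  · subst hne; simp [Real.zero_rpow hγ.ne']
  · exact h.upper x hx a ha b hb hne

lemma fol_mono {C γ : ℝ} (hC : 0 < C) (hγ : 0 < γ) {f fx : ℝ → ℝ → ℝ} (h : IsFol C γ f fx)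
    {x : ℝ} (hx : x ∈ unitInterval) : StrictMonoOn (f x) unitInterval := by
  refine ContinuousOn.strictMonoOn_of_injOn_Icc zero_le_one ?_ (fol_cont hγ h hx) (fol_ne hC h hx)
  rw [h.eq_bot x hx, h.eq_top x hx]; exact zero_le_one

lemma fol_surj {C γ : ℝ} (hγ : 0 < γ) {f fx : ℝ → ℝ → ℝ} (h : IsFol C γ f fx)
    {x : ℝ} (hx : x ∈ unitInterval) {z : ℝ} (hz : z ∈ unitInterval) :
    ∃ y ∈ unitInterval, f x y = z := by
  have := intermediate_value_Icc (zero_le_one (α := ℝ)) (fol_cont hγ h hx)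
  rw [h.eq_bot x hx, h.eq_top x hx] at this
  exact this hz

lemma fol_hinv_mem {C γ : ℝ} (hγ : 0 < γ) {f fx : ℝ → ℝ → ℝ} (h : IsFol C γ f fx)
    {x : ℝ} (hx : x ∈ unitInterval) {z : ℝ} (hz : z ∈ unitInterval) :
    hinv f x z ∈ unitInterval := Function.invFunOn_mem (fol_surj hγ h hx hz)

lemma fol_hinv_eq {C γ : ℝ} (hγ : 0 < γ) {f fx : ℝ → ℝ → ℝ} (h : IsFol C γ f fx)
    {x : ℝ} (hx : x ∈ unitInterval) {z : ℝ} (hz : z ∈ unitInterval) :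
    f x (hinv f x z) = z := Function.invFunOn_eq (fol_surj hγ h hx hz)

/-- Inverse form of the lower bound. -/
lemma fol_inv_bound {C γ : ℝ} (hC : 0 < C) (hγ : 0 < γ) {f fx : ℝ → ℝ → ℝ} (h : IsFol C γ f fx)
    {x : ℝ} (hx : x ∈ unitInterval) {a b : ℝ} (ha : a ∈ unitInterval) (hb : b ∈ unitInterval) :
    |b - a| ≤ C ^ γ * |f x b - f x a| ^ γ := by
  by_cases hne : a = b
  · subst hne; simp [Real.zero_rpow hγ.ne']
  · have h1 := h.lower x hx a ha b hb hne
    have h2 : |b - a| ^ (1 / γ) ≤ C * |f x b - f x a| := by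
      rw [inv_mul_le_iff₀ hC] at h1; exact h1
    have h3 := Real.rpow_le_rpow (by positivity) h2 hγ.le
    rw [← Real.rpow_mul (abs_nonneg _), one_div_mul_cancel hγ.ne', Real.rpow_one,
      Real.mul_rpow hC.le (abs_nonneg _)] at h3
    exact h3

lemma abs_le_one_of_mem {a b : ℝ} (ha : a ∈ unitInterval) (hb : b ∈ unitInterval) :
    |b - a| ≤ 1 := by
  rw [abs_le]; constructor <;> linarith [ha.1, ha.2, hb.1, hb.2]

lemma f3_isFol (C β : ℝ) (hC : 1 < C) (hβ0 : 0 < β) (hβ : β < 1) (F₂ : Fol C β) (ε : ℝ)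
    (hε0 : 0 < ε) (hε1 : ε < 1) :
    IsFol (max (C * (1 - ε) + ε) (C / (1 - ε + C * ε))) β
      (fun x y => (1 - ε) * F₂.f x y + ε * y) (fun x y => (1 - ε) * F₂.fx x y) := by
  have h := F₂.isFol
  have hC0 : 0 < C := by linarith
  have hε' : 0 < 1 - ε := by linarith
  refine ⟨?_, ?_, ?_, ?_, ?_, ?_, ?_, ?_⟩
  · intro x hx y hy
    have := h.mapsTo x hx y hy
    exact ⟨by nlinarith [this.1, hy.1], by nlinarith [this.2, hy.2]⟩
  · intro y hy x hx
    exact ((h.hasDeriv y hy x hx).const_mul (1 - ε)).add_const _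
  · exact continuousOn_const.mul h.derivCont
  · intro y hy
    simp only [h.eq_id y hy]; ring
  · intro x hx
    simp only [h.eq_bot x hx]; ring
  · intro x hx
    simp only [h.eq_top x hx]; ring
  · intro x hx a ha b hb hne
    have hmono := fol_mono hC0 hβ0 h hx
    have hD : 0 < 1 - ε + C * ε := by positivity
    have key : |(1 - ε) * F₂.f x b + ε * b - ((1 - ε) * F₂.f x a + ε * a)|
        = (1 - ε) * |F₂.f x b - F₂.f x a| + ε * |b - a| := by
      rcases lt_or_gt_of_ne hne with hlt | hlt
      · have := hmono ha hb hlt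
        rw [abs_of_pos (sub_pos.2 this), abs_of_pos (sub_pos.2 hlt), abs_of_pos]
        · ring
        · nlinarith
      · have := hmono hb ha hlt
        rw [abs_of_neg (sub_neg.2 this), abs_of_neg (sub_neg.2 hlt), abs_of_neg]
        · ring
        · nlinarith
    have hl := h.lower x hx a ha b hb hne
    have hpow : |b - a| ^ (1 / β) ≤ |b - a| := by
      have := Real.rpow_le_rpow_of_exponent_ge (abs_pos.2 (sub_ne_zero.2 (Ne.symm hne)))
        (abs_le_one_of_mem ha hb) (y := 1 / β) (z := 1) (by rw [le_div_iff₀ hβ0]; linarith)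
      simpa using this
    have hinv' : (max (C * (1 - ε) + ε) (C / (1 - ε + C * ε)))⁻¹ ≤ (1 - ε) * C⁻¹ + ε := by
      have : (1 - ε) * C⁻¹ + ε = (C / (1 - ε + C * ε))⁻¹ := by field_simp
      rw [this]
      exact inv_anti₀ (by positivity) (le_max_right _ _)
    have hp : 0 ≤ |b - a| ^ (1 / β) := by positivity
    show _ ≤ |(1 - ε) * F₂.f x b + ε * b - ((1 - ε) * F₂.f x a + ε * a)|
    rw [key]
    calc _ ≤ ((1 - ε) * C⁻¹ + ε) * |b - a| ^ (1 / β) := mul_le_mul_of_nonneg_right hinv' hp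
      _ = (1 - ε) * (C⁻¹ * |b - a| ^ (1 / β)) + ε * |b - a| ^ (1 / β) := by ring
      _ ≤ _ := by gcongr
  · intro x hx a ha b hb hne
    have hu := h.upper x hx a ha b hb hne
    have hpow : |b - a| ≤ |b - a| ^ β := by
      have := Real.rpow_le_rpow_of_exponent_ge (abs_pos.2 (sub_ne_zero.2 (Ne.symm hne)))
        (abs_le_one_of_mem ha hb) hβ.le
      simpa using this
    have hp : 0 ≤ |b - a| ^ β := by positivity
    show |(1 - ε) * F₂.f x b + ε * b - ((1 - ε) * F₂.f x a + ε * a)| ≤ _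
    calc |(1 - ε) * F₂.f x b + ε * b - ((1 - ε) * F₂.f x a + ε * a)|
        = |(1 - ε) * (F₂.f x b - F₂.f x a) + ε * (b - a)| := by congr 1; ring
      _ ≤ (1 - ε) * |F₂.f x b - F₂.f x a| + ε * |b - a| := by
        refine (abs_add_le _ _).trans_eq ?_
        rw [abs_mul, abs_mul, abs_of_pos hε', abs_of_pos hε0]
      _ ≤ (1 - ε) * (C * |b - a| ^ β) + ε * |b - a| ^ β := by gcongr
      _ = (C * (1 - ε) + ε) * |b - a| ^ β := by ring
      _ ≤ _ := mul_le_mul_of_nonneg_right (le_max_left _ _) hp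

/-- If `f₂ ∈ F_(C,β)` and `ε ∈ (0,1)` satisfies `ε ≤ ξ/12`,
`ε‖∂f₂/∂x‖_{C⁰} ≤ ξ/12`, `ε(1+C) ≤ ξ/12` and `ε ≤ (ξ/(24C^β))^{1/(β−α)}`, then the
interpolation `f₃(x,y) = (1−ε)f₂(x,y) + εy` satisfies `C_ε < C`, `f₃ ∈ F_(C_ε,β)` and
`d_α(f₃, f₂) < ξ/3`, where `C_ε = max{C(1−ε)+ε, C/(1−ε+Cε)}`. -/
theorem stmt13 (C β α : ℝ) (hC : 1 < C) (hα : 0 ≤ α) (hαβ : α < β) (hβ : β < 1)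
    (F₂ : Fol C β) (ξ ε : ℝ) (hξ : 0 < ξ) (hε0 : 0 < ε) (hε1 : ε < 1)
    (h1 : ε ≤ ξ / 12)
    (h2 : ε * sSup {s | ∃ x ∈ unitInterval, ∃ y ∈ unitInterval, s = |F₂.fx x y|} ≤ ξ / 12)
    (h3 : ε * (1 + C) ≤ ξ / 12)
    (h4 : ε ≤ (ξ / (24 * C ^ β)) ^ (1 / (β - α))) :
    max (C * (1 - ε) + ε) (C / (1 - ε + C * ε)) < C ∧
    IsFol (max (C * (1 - ε) + ε) (C / (1 - ε + C * ε))) β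
      (fun x y => (1 - ε) * F₂.f x y + ε * y) (fun x y => (1 - ε) * F₂.fx x y) ∧
    dalpha α (fun x y => (1 - ε) * F₂.f x y + ε * y) (fun x y => (1 - ε) * F₂.fx x y)
      F₂.f F₂.fx < ξ / 3 := by
  have hβ0 : 0 < β := lt_of_le_of_lt hα hαβ
  have hC0 : 0 < C := by linarith
  have hF := F₂.isFol
  have hlt : max (C * (1 - ε) + ε) (C / (1 - ε + C * ε)) < C := by
    refine max_lt (by nlinarith) ?_
    rw [div_lt_iff₀ (by nlinarith)]
    nlinarith [mul_pos hε0 (sub_pos.2 hC), mul_pos hC0 (mul_pos hε0 (sub_pos.2 hC))]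
  have h3F := f3_isFol C β hC hβ0 hβ F₂ ε hε0 hε1
  refine ⟨hlt, h3F, ?_⟩
  have hCe0 : 0 < max (C * (1 - ε) + ε) (C / (1 - ε + C * ε)) :=
    lt_max_of_lt_left (by nlinarith)
  have d1 : C0dist (fun x y => (1 - ε) * F₂.f x y + ε * y) F₂.f ≤ ξ / 12 := by
    refine Real.sSup_le ?_ (by positivity)
    rintro r ⟨x, hx, y, hy, rfl⟩
    have : (1 - ε) * F₂.f x y + ε * y - F₂.f x y = ε * (y - F₂.f x y) := by ring
    simp only [this, abs_mul, abs_of_pos hε0]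
    have := abs_le_one_of_mem (hF.mapsTo x hx y hy) hy
    nlinarith
  have d2 : C0dist (fun x y => (1 - ε) * F₂.fx x y) F₂.fx ≤ ξ / 12 := by
    refine Real.sSup_le ?_ (by positivity)
    rintro r ⟨x, hx, y, hy, rfl⟩
    have : (1 - ε) * F₂.fx x y - F₂.fx x y = -(ε * F₂.fx x y) := by ring
    simp only [this, abs_neg, abs_mul, abs_of_pos hε0]
    refine le_trans ?_ h2
    refine mul_le_mul_of_nonneg_left (le_csSup ?_ ⟨x, hx, y, hy, rfl⟩) hε0.le
    have hK : IsCompact MSq := isCompact_Icc.prod isCompact_Icc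
    obtain ⟨B, hB⟩ := hK.exists_bound_of_continuousOn hF.derivCont
    refine ⟨B, ?_⟩
    rintro s ⟨u, hu, v, hv, rfl⟩
    exact hB (u, v) ⟨hu, hv⟩
  have d3 : ∀ x ∈ unitInterval,
      holDist α ((fun x y => (1 - ε) * F₂.f x y + ε * y) x) (F₂.f x) ≤ ξ / 12 := by
    intro x hx
    refine Real.sSup_le ?_ (by positivity)
    rintro r ⟨a, ha, b, hb, hne, rfl⟩
    have hpos : 0 < |b - a| := abs_pos.2 (sub_ne_zero.2 (Ne.symm hne))
    have hle := abs_le_one_of_mem ha hb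
    rw [div_le_iff₀ (by positivity)]
    have e : (1 - ε) * F₂.f x b + ε * b - F₂.f x b - ((1 - ε) * F₂.f x a + ε * a - F₂.f x a)
        = ε * ((b - a) - (F₂.f x b - F₂.f x a)) := by ring
    simp only [e, abs_mul, abs_of_pos hε0]
    have p1 : |b - a| ≤ |b - a| ^ α := by
      have := Real.rpow_le_rpow_of_exponent_ge hpos hle (hαβ.trans hβ).le
      simpa using this
    have p2 : |b - a| ^ β ≤ |b - a| ^ α := Real.rpow_le_rpow_of_exponent_ge hpos hle hαβ.le
    calc ε * |(b - a) - (F₂.f x b - F₂.f x a)| ≤ ε * (|b - a| + |F₂.f x b - F₂.f x a|) := by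
          gcongr; exact abs_sub _ _
      _ ≤ ε * (|b - a| ^ α + C * |b - a| ^ α) := by
          gcongr
          exact (hF.upper x hx a ha b hb hne).trans (by gcongr)
      _ = ε * (1 + C) * |b - a| ^ α := by ring
      _ ≤ _ := by gcongr
  have hγ : 0 < β - α := sub_pos.2 hαβ
  have hCβ : 0 < C ^ β := by positivity
  have h5 : 2 * C ^ β * ε ^ (β - α) ≤ ξ / 12 := by
    have := Real.rpow_le_rpow hε0.le h4 hγ.le
    rw [← Real.rpow_mul (by positivity), one_div_mul_cancel hγ.ne', Real.rpow_one,
      le_div_iff₀ (by positivity)] at this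
    linarith
  have d4 : ∀ x ∈ unitInterval,
      holDist α (hinv (fun x y => (1 - ε) * F₂.f x y + ε * y) x) (hinv F₂.f x) ≤ ξ / 12 := by
    intro x hx
    refine Real.sSup_le ?_ (by positivity)
    rintro r ⟨a, ha, b, hb, hne, rfl⟩
    have hpos : 0 < |b - a| := abs_pos.2 (sub_ne_zero.2 (Ne.symm hne))
    rw [div_le_iff₀ (by positivity)]
    set f3 : ℝ → ℝ → ℝ := fun x y => (1 - ε) * F₂.f x y + ε * y with hf3
    have c0 : ∀ z ∈ unitInterval, |hinv f3 x z - hinv F₂.f x z| ≤ C ^ β * ε ^ β := by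
      intro z hz
      have m3 := fol_hinv_mem hβ0 h3F hx hz
      have e3 := fol_hinv_eq hβ0 h3F hx hz
      have m2 := fol_hinv_mem hβ0 hF hx hz
      have e2 := fol_hinv_eq hβ0 hF hx hz
      have hb := fol_inv_bound hC0 hβ0 hF hx m2 m3
      rw [e2] at hb
      refine hb.trans ?_
      have hm := abs_le_one_of_mem m3 (hF.mapsTo x hx _ m3)
      have : F₂.f x (hinv f3 x z) - z = ε * (F₂.f x (hinv f3 x z) - hinv f3 x z) := by
        have e3' : (1 - ε) * F₂.f x (hinv f3 x z) + ε * hinv f3 x z = z := e3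
        linear_combination e3'
      have hle : |F₂.f x (hinv f3 x z) - z| ≤ ε := by
        rw [this, abs_mul, abs_of_pos hε0]; nlinarith
      gcongr
    have hold2 : |hinv F₂.f x b - hinv F₂.f x a| ≤ C ^ β * |b - a| ^ β := by
      have := fol_inv_bound hC0 hβ0 hF hx (fol_hinv_mem hβ0 hF hx ha) (fol_hinv_mem hβ0 hF hx hb)
      rwa [fol_hinv_eq hβ0 hF hx ha, fol_hinv_eq hβ0 hF hx hb] at this
    have hold3 : |hinv f3 x b - hinv f3 x a| ≤ C ^ β * |b - a| ^ β := by
      have := fol_inv_bound hCe0 hβ0 h3F hx (fol_hinv_mem hβ0 h3F hx ha)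
        (fol_hinv_mem hβ0 h3F hx hb)
      rw [fol_hinv_eq hβ0 h3F hx ha, fol_hinv_eq hβ0 h3F hx hb] at this
      refine this.trans ?_
      gcongr
    have hsplit : ∀ t : ℝ, 0 < t → t ^ β = t ^ (β - α) * t ^ α := by
      intro t ht
      rw [← Real.rpow_add ht]; congr 1; ring
    have hpa : 0 < |b - a| ^ α := by positivity
    rcases le_total ε |b - a| with hcase | hcase
    · calc _ ≤ |hinv f3 x b - hinv F₂.f x b| + |hinv f3 x a - hinv F₂.f x a| := abs_sub _ _
        _ ≤ C ^ β * ε ^ β + C ^ β * ε ^ β := add_le_add (c0 b hb) (c0 a ha)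
        _ = 2 * C ^ β * ε ^ (β - α) * ε ^ α := by rw [hsplit ε hε0]; ring
        _ ≤ ξ / 12 * |b - a| ^ α := by gcongr
    · calc |hinv f3 x b - hinv F₂.f x b - (hinv f3 x a - hinv F₂.f x a)|
          = |(hinv f3 x b - hinv f3 x a) - (hinv F₂.f x b - hinv F₂.f x a)| := by
            congr 1; ring
        _ ≤ |hinv f3 x b - hinv f3 x a| + |hinv F₂.f x b - hinv F₂.f x a| := abs_sub _ _
        _ ≤ C ^ β * |b - a| ^ β + C ^ β * |b - a| ^ β := add_le_add hold3 hold2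
        _ = 2 * C ^ β * |b - a| ^ (β - α) * |b - a| ^ α := by rw [hsplit _ hpos]; ring
        _ ≤ 2 * C ^ β * ε ^ (β - α) * |b - a| ^ α := by gcongr
        _ ≤ ξ / 12 * |b - a| ^ α := by gcongr
  have d5 : sSup {r | ∃ x ∈ unitInterval,
      r = max (holDist α ((fun x y => (1 - ε) * F₂.f x y + ε * y) x) (F₂.f x))
        (holDist α (hinv (fun x y => (1 - ε) * F₂.f x y + ε * y) x) (hinv F₂.f x))} ≤ ξ / 12 := by
    refine Real.sSup_le ?_ (by positivity)
    rintro r ⟨x, hx, rfl⟩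
    exact max_le (d3 x hx) (d4 x hx)
  unfold dalpha
  linarith

end
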